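/- arXiv:1601.08086 — 2 statements merged into one kernel-verified Lean document; each statement's English description precedes it below -/
import Mathlib

section
/- Let f ∈ R = K[x, y, z] be a quasi-homogeneous polynomial of degree w = α_x + α_y + α_z (with weights deg x = α_x, deg y = α_y, deg z = α_z) having an isolated singularity. If the coefficient of (xyz)^{p−1} in f^{p−1} is nonzero, then fpt(f) = 1; if this coefficient is zero, then fpt(f) = 1 − 1/p. -/
/-!
Write `R = K[x, y, z]`, `w = α_x + α_y + α_z`, `m = (x, y, z)`, `J` for the Jacobian ideal of `f`,
and `μ(q) = μ_f(q)`.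

The argument rests on a dichotomy (`dvd_muF_or_le`): for `q = p^e` with `e ≥ 1`, either `p ∣ μ(q)`
or `μ(q) ≥ q - 1`. Let `k = μ(q)` be prime to `p`. The derivations `∂_i` preserve `m^{[q]}`, so
`f^k ∈ m^{[q]}` gives `f^{k-1} J ⊆ m^{[q]}`. The ring `R/J` is a complete intersection with
generators of degrees `w - α_i`, and so vanishes in degrees above `∑ (w - 2 α_i) = w`
(`mem_jacobianIdeal`). On the other hand `f^{k-1} ∉ m^{[q]}` contains a monomial dividing
`(xyz)^{q-1}`; the complementary monomial has degree `(q - k) w` and multiplies `f^{k-1}` outside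
`m^{[q]}`, so it is not in `J` and `(q - k) w ≤ w`.

The vanishing in degrees above `w` comes from Hilbert series: killing a form of degree `d` which is
a nonzerodivisor multiplies the series by `1 - t^d` (`hilbertSeries_sup_span`). Applied to the
partial derivatives and to the variables, this gives
`H_{R/J} ∏ (1 - t^{α_i}) = ∏ (1 - t^{w - α_i})`. After cancelling `(1 - t)^3` everything has
nonnegative coefficients, so the degree of `H_{R/J}` can be read off (`coeff_eq_zero_of_mul_eq`).

If the coefficient of `(xyz)^{p-1}` in `f^{p-1}` is nonzero, the identity
`f^{pq-1} = f^{p-1} (f^{q-1})^p` shows inductively that `(xyz)^{q-1}` occurs in `f^{q-1}`, so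
`μ(q) = q` for all `q = p^e`. If it is zero, then `f^{p-1} ∈ m^{[p]}` for degree reasons and the
dichotomy forces `μ(p) = p - 1`. Inductively `μ(pq) ≤ p μ(q) < pq - 1`, so `p ∣ μ(pq)`, and flatness
of Frobenius gives `μ(pq) = p μ(q)`. Hence `μ(p^{e+1}) = p^e (p - 1)`.
-/

open MvPolynomial Filter Topology

/-- The Frobenius power `m^{[q]}` of the maximal ideal `m = (x_0, …, x_n)` of
`R = K[x_0, …, x_n]`, i.e. the ideal generated by `x_0^q, …, x_n^q`. -/
noncomputable def frobeniusPower (K : Type*) [Field K] (n q : ℕ) :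
    Ideal (MvPolynomial (Fin (n + 1)) K) :=
  Ideal.span (Set.range fun i : Fin (n + 1) => (X i : MvPolynomial (Fin (n + 1)) K) ^ q)

/-- `μ_f(q) = min {k ∈ ℕ : f^k ∈ m^{[q]}}`. -/
noncomputable def muF {K : Type*} [Field K] {n : ℕ}
    (f : MvPolynomial (Fin (n + 1)) K) (q : ℕ) : ℕ :=
  sInf {k : ℕ | f ^ k ∈ frobeniusPower K n q}

/-- `f` has an isolated singularity: its partial derivatives `∂f/∂x_0, …, ∂f/∂x_n`
form a regular sequence in `R`. -/
def HasIsolatedSingularity {K : Type*} [Field K] {n : ℕ}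
    (f : MvPolynomial (Fin (n + 1)) K) : Prop :=
  RingTheory.Sequence.IsRegular (MvPolynomial (Fin (n + 1)) K)
    ((List.finRange (n + 1)).map fun i => MvPolynomial.pderiv i f)

/-- `fpt(f) = c`: the sequence `μ_f(p^e)/p^e` converges to `c`. -/
def HasFpt {K : Type*} [Field K] {n : ℕ} (p : ℕ)
    (f : MvPolynomial (Fin (n + 1)) K) (c : ℝ) : Prop :=
  Tendsto (fun e : ℕ => (muF f (p ^ e) : ℝ) / ((p : ℝ) ^ e)) atTop (𝓝 c)

/-! ### Hilbert series of weighted homogeneous ideals -/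

section Hilbert

variable {K : Type*} [Field K] {α : Fin 3 → ℕ}

attribute [local instance] MvPolynomial.weightedGradedAlgebra

/-- Multiplication by a form of degree `d` shifts weighted homogeneous components by `d`. -/
lemma component_mul {g : MvPolynomial (Fin 3) K} {d : ℕ}
    (hg : g.IsWeightedHomogeneous α d) (s : MvPolynomial (Fin 3) K) (n : ℕ) :
    weightedHomogeneousComponent α n (g * s) =
      if d ≤ n then g * weightedHomogeneousComponent α (n - d) s else 0 := by
  have h := DirectSum.coe_decompose_mul_of_left_mem (weightedHomogeneousSubmodule K α)
    (a := g) (b := s) (i := d) n hg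
  have key : ∀ (φ : MvPolynomial (Fin 3) K) (m : ℕ),
      (DirectSum.decompose (weightedHomogeneousSubmodule K α) φ m : MvPolynomial (Fin 3) K) =
        weightedHomogeneousComponent α m φ :=
    fun φ m => weightedDecomposition.decompose'_apply K α φ m
  simpa only [key] using h

/-- An ideal is graded when it contains the weighted homogeneous components of its elements. -/
def IsGradedIdeal (α : Fin 3 → ℕ) (I : Ideal (MvPolynomial (Fin 3) K)) : Prop :=
  ∀ r ∈ I, ∀ n, weightedHomogeneousComponent α n r ∈ I

lemma IsGradedIdeal.sup_span {I : Ideal (MvPolynomial (Fin 3) K)} (hI : IsGradedIdeal α I)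
    {g : MvPolynomial (Fin 3) K} {d : ℕ} (hg : g.IsWeightedHomogeneous α d) :
    IsGradedIdeal α (I ⊔ Ideal.span {g}) := by
  intro r hr n
  obtain ⟨i, hi, t, ht, rfl⟩ := Submodule.mem_sup.mp hr
  obtain ⟨s, rfl⟩ := Ideal.mem_span_singleton.mp ht
  rw [map_add, component_mul hg]
  refine Submodule.add_mem_sup (hI i hi n) ?_
  split_ifs
  · exact Ideal.mul_mem_right _ _ (Ideal.mem_span_singleton_self g)
  · exact zero_mem _

/-- The degree `n` part `I ∩ R_n` of an ideal `I`, as a `K`-subspace. -/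
noncomputable def gradedPart (α : Fin 3 → ℕ) (I : Ideal (MvPolynomial (Fin 3) K)) (n : ℕ) :
    Submodule K (MvPolynomial (Fin 3) K) :=
  I.restrictScalars K ⊓ weightedHomogeneousSubmodule K α n

lemma mem_gradedPart {I : Ideal (MvPolynomial (Fin 3) K)} {n : ℕ} {r : MvPolynomial (Fin 3) K} :
    r ∈ gradedPart α I n ↔ r ∈ I ∧ r.IsWeightedHomogeneous α n := by
  simp [gradedPart]

lemma gradedPart_le (I : Ideal (MvPolynomial (Fin 3) K)) (n : ℕ) :
    gradedPart α I n ≤ weightedHomogeneousSubmodule K α n :=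
  inf_le_right

lemma gradedPart_sup_span_of_lt {I : Ideal (MvPolynomial (Fin 3) K)} (hI : IsGradedIdeal α I)
    {g : MvPolynomial (Fin 3) K} {d n : ℕ} (hg : g.IsWeightedHomogeneous α d) (hn : n < d) :
    gradedPart α (I ⊔ Ideal.span {g}) n = gradedPart α I n := by
  ext r
  simp only [mem_gradedPart]
  refine ⟨fun ⟨hr, hr'⟩ => ⟨?_, hr'⟩, fun ⟨hr, hr'⟩ => ⟨Ideal.mem_sup_left hr, hr'⟩⟩
  obtain ⟨i, hi, t, ht, rfl⟩ := Submodule.mem_sup.mp hr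
  obtain ⟨s, rfl⟩ := Ideal.mem_span_singleton.mp ht
  rw [← hr'.weightedHomogeneousComponent_same, map_add, component_mul hg, if_neg (by omega),
    add_zero]
  exact hI i hi n

lemma gradedPart_sup_span_add {I : Ideal (MvPolynomial (Fin 3) K)} (hI : IsGradedIdeal α I)
    {g : MvPolynomial (Fin 3) K} {d : ℕ} (hg : g.IsWeightedHomogeneous α d) (n : ℕ) :
    gradedPart α (I ⊔ Ideal.span {g}) (n + d) = gradedPart α I (n + d) ⊔
      (weightedHomogeneousSubmodule K α n).map (LinearMap.mulLeft K g) := by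
  apply le_antisymm
  · intro r hr
    obtain ⟨hr, hr'⟩ := mem_gradedPart.mp hr
    obtain ⟨i, hi, t, ht, rfl⟩ := Submodule.mem_sup.mp hr
    obtain ⟨s, rfl⟩ := Ideal.mem_span_singleton.mp ht
    rw [← hr'.weightedHomogeneousComponent_same, map_add, component_mul hg, if_pos (by omega)]
    refine Submodule.add_mem_sup (mem_gradedPart.mpr ⟨hI i hi _, ?_⟩) ⟨_, ?_, rfl⟩
    · exact weightedHomogeneousComponent_isWeightedHomogeneous _ _
    · rw [Nat.add_sub_cancel]
      exact weightedHomogeneousComponent_mem _ _ _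
  · refine sup_le (fun r hr => ?_) ?_
    · obtain ⟨hr, hr'⟩ := mem_gradedPart.mp hr
      exact mem_gradedPart.mpr ⟨Ideal.mem_sup_left hr, hr'⟩
    · rintro _ ⟨s, hs, rfl⟩
      refine mem_gradedPart.mpr ⟨Ideal.mem_sup_right ?_, ?_⟩
      · exact Ideal.mul_mem_right _ _ (Ideal.mem_span_singleton_self g)
      · rw [add_comm]
        exact hg.mul hs

lemma gradedPart_inf_map {I : Ideal (MvPolynomial (Fin 3) K)}
    {g : MvPolynomial (Fin 3) K} {d : ℕ} (hg : g.IsWeightedHomogeneous α d)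
    (hreg : ∀ r, g * r ∈ I → r ∈ I) (n : ℕ) :
    gradedPart α I (n + d) ⊓ (weightedHomogeneousSubmodule K α n).map (LinearMap.mulLeft K g) =
      (gradedPart α I n).map (LinearMap.mulLeft K g) := by
  apply le_antisymm
  · rintro _ ⟨hr, s, hs, rfl⟩
    exact ⟨s, mem_gradedPart.mpr ⟨hreg _ (mem_gradedPart.mp hr).1, hs⟩, rfl⟩
  · rintro _ ⟨s, hs, rfl⟩
    obtain ⟨hs, hs'⟩ := mem_gradedPart.mp hs
    refine ⟨mem_gradedPart.mpr ⟨Ideal.mul_mem_left _ _ hs, ?_⟩, s, hs', rfl⟩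
    rw [add_comm]
    exact hg.mul hs'

/-- The Hilbert function `n ↦ dim_K (R/I)_n`, computed as `dim R_n - dim I_n`. -/
noncomputable def hilbertFn (α : Fin 3 → ℕ) (I : Ideal (MvPolynomial (Fin 3) K)) (n : ℕ) : ℤ :=
  (Module.finrank K (weightedHomogeneousSubmodule K α n) : ℤ) -
    Module.finrank K (gradedPart α I n)

/-- The Hilbert series of `R/I`. -/
noncomputable def hilbertSeries (α : Fin 3 → ℕ) (I : Ideal (MvPolynomial (Fin 3) K)) :
    PowerSeries ℤ :=
  PowerSeries.mk (hilbertFn α I)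

lemma finite_homogeneous (hα : ∀ i, 0 < α i) (n : ℕ) :
    FiniteDimensional K (weightedHomogeneousSubmodule K α n) :=
  Module.Finite.iff_fg.mpr (weightedHomogeneousSubmodule_fg K α (fun i => (hα i).ne') n)

lemma hilbertFn_nonneg (hα : ∀ i, 0 < α i) (I : Ideal (MvPolynomial (Fin 3) K)) (n : ℕ) :
    0 ≤ hilbertFn α I n := by
  have := finite_homogeneous (K := K) hα n
  have := Submodule.finrank_mono (gradedPart_le (α := α) I n)
  unfold hilbertFn
  omega

/-- If `(R/I)_n` has dimension `0`, then `R_n ⊆ I`. -/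
lemma mem_of_hilbertFn_eq_zero (hα : ∀ i, 0 < α i) {I : Ideal (MvPolynomial (Fin 3) K)} {n : ℕ}
    (h : hilbertFn α I n = 0) {r : MvPolynomial (Fin 3) K} (hr : r.IsWeightedHomogeneous α n) :
    r ∈ I := by
  have := finite_homogeneous (K := K) hα n
  have h1 : gradedPart α I n = weightedHomogeneousSubmodule K α n := by
    apply Submodule.eq_of_le_of_finrank_eq (gradedPart_le I n)
    unfold hilbertFn at h
    omega
  have h2 : r ∈ gradedPart α I n := h1 ▸ hr
  exact (mem_gradedPart.mp h2).1

lemma hilbertFn_eq_zero (I : Ideal (MvPolynomial (Fin 3) K)) (n : ℕ)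
    (h : ∀ r : MvPolynomial (Fin 3) K, r.IsWeightedHomogeneous α n → r ∈ I) :
    hilbertFn α I n = 0 := by
  have h1 : gradedPart α I n = weightedHomogeneousSubmodule K α n :=
    le_antisymm (gradedPart_le I n) fun r hr => mem_gradedPart.mpr ⟨h r hr, hr⟩
  rw [hilbertFn, h1, sub_self]

/-- Killing a form of degree `d` that is a nonzerodivisor modulo a graded ideal multiplies the
Hilbert series by `1 - t^d`, by exactness of
`0 → (R/I)_{n-d} → (R/I)_n → (R/(I + gR))_n → 0`. -/
lemma hilbertSeries_sup_span (hα : ∀ i, 0 < α i) {I : Ideal (MvPolynomial (Fin 3) K)}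
    (hI : IsGradedIdeal α I) {g : MvPolynomial (Fin 3) K} {d : ℕ}
    (hg : g.IsWeightedHomogeneous α d) (hg0 : g ≠ 0) (hreg : ∀ r, g * r ∈ I → r ∈ I) :
    hilbertSeries α (I ⊔ Ideal.span {g}) = hilbertSeries α I * (1 - PowerSeries.X ^ d) := by
  have hinj : Function.Injective (LinearMap.mulLeft K g) := fun a b hab =>
    mul_left_cancel₀ hg0 hab
  have hrank : ∀ S : Submodule K (MvPolynomial (Fin 3) K),
      Module.finrank K (S.map (LinearMap.mulLeft K g)) = Module.finrank K S := fun S =>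
    (Submodule.equivMapOfInjective _ hinj S).finrank_eq.symm
  ext n
  rw [mul_sub, mul_one, map_sub, PowerSeries.coeff_mul_X_pow']
  simp only [hilbertSeries, PowerSeries.coeff_mk]
  split_ifs with hn
  · obtain ⟨m, rfl⟩ := Nat.exists_eq_add_of_le' hn
    rw [Nat.add_sub_cancel]
    have := finite_homogeneous (K := K) hα (m + d)
    have := finite_homogeneous (K := K) hα m
    have : FiniteDimensional K (gradedPart α I (m + d)) :=
      Submodule.finiteDimensional_of_le (gradedPart_le I _)
    have e := Submodule.finrank_sup_add_finrank_inf_eq (gradedPart α I (m + d))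
      ((weightedHomogeneousSubmodule K α m).map (LinearMap.mulLeft K g))
    rw [← gradedPart_sup_span_add hI hg, gradedPart_inf_map hg hreg, hrank, hrank] at e
    unfold hilbertFn
    omega
  · rw [hilbertFn, gradedPart_sup_span_of_lt hI hg (by omega), hilbertFn, sub_zero]

/-- Hilbert series of a complete intersection cut out by three forms. -/
lemma hilbertSeries_three (hα : ∀ i, 0 < α i) (g : Fin 3 → MvPolynomial (Fin 3) K) (d : Fin 3 → ℕ)
    (hg : ∀ i, (g i).IsWeightedHomogeneous α (d i)) (hg0 : ∀ i, g i ≠ 0)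
    (h1 : ∀ r, g 1 * r ∈ Ideal.span {g 0} → r ∈ Ideal.span {g 0})
    (h2 : ∀ r, g 2 * r ∈ Ideal.span {g 0} ⊔ Ideal.span {g 1} →
      r ∈ Ideal.span {g 0} ⊔ Ideal.span {g 1}) :
    hilbertSeries α (Ideal.span {g 0} ⊔ Ideal.span {g 1} ⊔ Ideal.span {g 2}) =
      hilbertSeries α (⊥ : Ideal (MvPolynomial (Fin 3) K)) *
        ((1 - PowerSeries.X ^ d 0) * (1 - PowerSeries.X ^ d 1) * (1 - PowerSeries.X ^ d 2)) := by
  have b0 : IsGradedIdeal α (⊥ : Ideal (MvPolynomial (Fin 3) K)) := by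
    intro r hr n
    rw [Ideal.mem_bot] at hr
    rw [hr, map_zero]
    exact zero_mem _
  have b1 := b0.sup_span (hg 0)
  have s1 := hilbertSeries_sup_span hα b0 (hg 0) (hg0 0) (by
    intro r hr
    simpa [hg0 0] using hr)
  rw [bot_sup_eq] at b1 s1
  rw [hilbertSeries_sup_span hα (b1.sup_span (hg 1)) (hg 2) (hg0 2) h2,
    hilbertSeries_sup_span hα b1 (hg 1) (hg0 1) h1, s1]
  ring

/-- The variables form a regular sequence with residue ring `K`. Comparing with the complete
intersection formula, `H_R(t) * ∏ (1 - t^{α_i}) = 1`. -/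
lemma hilbertSeries_bot (hα : ∀ i, 0 < α i) :
    hilbertSeries α (⊥ : Ideal (MvPolynomial (Fin 3) K)) *
      ((1 - PowerSeries.X ^ α 0) * (1 - PowerSeries.X ^ α 1) * (1 - PowerSeries.X ^ α 2)) = 1 := by
  have hvar : ∀ (s : Set (Fin 3)) (i : Fin 3), i ∉ s → ∀ r : MvPolynomial (Fin 3) K,
      X i * r ∈ Ideal.span (X '' s : Set (MvPolynomial (Fin 3) K)) →
        r ∈ Ideal.span (X '' s : Set (MvPolynomial (Fin 3) K)) := by
    intro s i hi r hr
    rw [mem_ideal_span_X_image] at hr ⊢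
    intro m hm
    obtain ⟨j, hj, hmj⟩ := hr (Finsupp.single i 1 + m) (by
      rw [mem_support_iff, coeff_X_mul]
      exact mem_support_iff.mp hm)
    refine ⟨j, hj, ?_⟩
    have hij : i ≠ j := fun h => hi (h ▸ hj)
    simpa [Finsupp.single_apply, hij] using hmj
  have e1 : Ideal.span {(X 0 : MvPolynomial (Fin 3) K)} = Ideal.span (X '' {0}) := by simp
  have e2 : Ideal.span {(X 0 : MvPolynomial (Fin 3) K)} ⊔ Ideal.span {X 1} =
      Ideal.span (X '' {0, 1}) := by
    rw [← Ideal.span_union, Set.image_pair]; rfl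
  have e3 : Ideal.span {(X 0 : MvPolynomial (Fin 3) K)} ⊔ Ideal.span {X 1} ⊔ Ideal.span {X 2} =
      Ideal.span (X '' Set.univ) := by
    rw [← Ideal.span_union, ← Ideal.span_union]
    congr 1
    ext r
    simp [Fin.exists_fin_succ, eq_comm]
    tauto
  rw [← hilbertSeries_three hα (fun i => (X i : MvPolynomial (Fin 3) K)) α
    (fun i => isWeightedHomogeneous_X K α i) (fun i => X_ne_zero i)
    (by rw [e1]; exact hvar _ _ (by simp)) (by rw [e2]; exact hvar _ _ (by simp)), e3]
  ext n
  rw [hilbertSeries, PowerSeries.coeff_mk, PowerSeries.coeff_one]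
  split_ifs with hn
  · subst hn
    have hz : ∀ r : MvPolynomial (Fin 3) K, r.IsWeightedHomogeneous α 0 →
        ∀ m, coeff m r ≠ 0 → m = 0 := by
      intro r hr m hm
      have := hr hm
      ext i
      have hle := Finsupp.le_weight α (s := i) (hα i).ne' m
      simp only [Finsupp.coe_zero, Pi.zero_apply]
      omega
    have g0 : gradedPart α (Ideal.span (X '' Set.univ : Set (MvPolynomial (Fin 3) K))) 0 = ⊥ := by
      rw [eq_bot_iff]
      intro r hr
      obtain ⟨hr, hr'⟩ := mem_gradedPart.mp hr
      rw [mem_ideal_span_X_image] at hr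
      rw [Submodule.mem_bot]
      ext m
      by_contra hm
      obtain ⟨i, -, hi⟩ := hr m (mem_support_iff.mpr hm)
      exact hi (by simp [hz r hr' m hm])
    have g1 : weightedHomogeneousSubmodule K α 0 =
        Submodule.span K {(1 : MvPolynomial (Fin 3) K)} := by
      apply le_antisymm
      · intro r hr
        rw [Submodule.mem_span_singleton]
        refine ⟨coeff 0 r, ?_⟩
        ext m
        by_cases hm : m = 0
        · subst hm; simp
        · have : coeff m r = 0 := by
            by_contra h
            exact hm (hz r hr m h)
          rw [this, coeff_smul, coeff_one, if_neg (Ne.symm hm), smul_zero]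
      · rw [Submodule.span_singleton_le_iff_mem]
        exact isWeightedHomogeneous_one K α
    rw [hilbertFn, g0, g1, finrank_span_singleton one_ne_zero]
    simp
  · apply hilbertFn_eq_zero
    intro r hr
    rw [mem_ideal_span_X_image]
    intro m hm
    by_contra! hcon
    apply hn
    rw [← hr (mem_support_iff.mp hm)]
    have : m = 0 := by
      ext i
      exact hcon i (Set.mem_univ i)
    rw [this, map_zero]

end Hilbert

/-! ### Degree bound for a quotient of products of `1 - t^a` -/

section Series

lemma coeff_mul_nonneg {P Q : PowerSeries ℤ} (hP : ∀ n, 0 ≤ P.coeff n)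
    (hQ : ∀ n, 0 ≤ Q.coeff n) (n : ℕ) : 0 ≤ (P * Q).coeff n := by
  rw [PowerSeries.coeff_mul]
  exact Finset.sum_nonneg fun x _ => mul_nonneg (hP _) (hQ _)

lemma coeff_mul_coeff_le {P Q : PowerSeries ℤ} (hP : ∀ n, 0 ≤ P.coeff n)
    (hQ : ∀ n, 0 ≤ Q.coeff n) (i j : ℕ) :
    P.coeff i * Q.coeff j ≤ (P * Q).coeff (i + j) := by
  rw [PowerSeries.coeff_mul]
  exact Finset.single_le_sum (f := fun x : ℕ × ℕ => P.coeff x.1 * Q.coeff x.2)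
    (fun x _ => mul_nonneg (hP _) (hQ _))
    (a := (i, j)) (Finset.HasAntidiagonal.mem_antidiagonal.mpr rfl)

lemma coeff_mul_eq_zero_of_lt {P Q : PowerSeries ℤ} {M N : ℕ} (hP : ∀ n, M < n → P.coeff n = 0)
    (hQ : ∀ n, N < n → Q.coeff n = 0) (n : ℕ) (hn : M + N < n) : (P * Q).coeff n = 0 := by
  rw [PowerSeries.coeff_mul]
  refine Finset.sum_eq_zero fun x hx => ?_
  rw [Finset.HasAntidiagonal.mem_antidiagonal] at hx
  by_cases h : M < x.1
  · rw [hP _ h, zero_mul]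
  · rw [hQ x.2 (by omega), mul_zero]

/-- The polynomial `1 + t + ⋯ + t^{a-1} = (1 - t^a)/(1 - t)`. -/
noncomputable def geomSeries (a : ℕ) : PowerSeries ℤ :=
  ∑ i ∈ Finset.range a, PowerSeries.X ^ i

lemma one_sub_mul_geomSeries (a : ℕ) :
    (1 - PowerSeries.X) * geomSeries a = 1 - PowerSeries.X ^ a :=
  mul_neg_geom_sum _ _

lemma coeff_geomSeries (a n : ℕ) : (geomSeries a).coeff n = if n < a then 1 else 0 := by
  simp [geomSeries, PowerSeries.coeff_X_pow]

lemma coeff_geomSeries_nonneg (a n : ℕ) : 0 ≤ (geomSeries a).coeff n := by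
  rw [coeff_geomSeries]
  split_ifs <;> simp

/-- A power series with nonnegative coefficients equal to `∏ (1 - t^{d_i}) / ∏ (1 - t^{a_i})` is a
polynomial of degree at most `∑ (d_i - a_i)`: after division by `(1 - t)^3` both products have
nonnegative coefficients, so no cancellation can hide a coefficient of `P` of higher degree. -/
lemma coeff_eq_zero_of_mul_eq {P : PowerSeries ℤ} (hP : ∀ n, 0 ≤ P.coeff n) (a d : Fin 3 → ℕ)
    (ha : ∀ i, 0 < a i) (hd : ∀ i, 0 < d i)
    (h : P * ((1 - PowerSeries.X ^ a 0) * (1 - PowerSeries.X ^ a 1) * (1 - PowerSeries.X ^ a 2)) =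
      (1 - PowerSeries.X ^ d 0) * (1 - PowerSeries.X ^ d 1) * (1 - PowerSeries.X ^ d 2))
    (n : ℕ) (hn : d 0 + d 1 + d 2 < n + (a 0 + a 1 + a 2)) : P.coeff n = 0 := by
  have hX : (1 - PowerSeries.X : PowerSeries ℤ) ≠ 0 := by
    intro h0
    have := congrArg (PowerSeries.coeff 0) h0
    simp at this
  have key : P * (geomSeries (a 0) * geomSeries (a 1) * geomSeries (a 2)) =
      geomSeries (d 0) * geomSeries (d 1) * geomSeries (d 2) := by
    apply mul_left_cancel₀ (pow_ne_zero 3 hX)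
    simp only [← one_sub_mul_geomSeries] at h
    linear_combination h
  have hA2 := coeff_mul_nonneg (coeff_geomSeries_nonneg (a 0)) (coeff_geomSeries_nonneg (a 1))
  have hA3 := coeff_mul_nonneg hA2 (coeff_geomSeries_nonneg (a 2))
  have top : ∀ i, (geomSeries (a i)).coeff (a i - 1) = 1 := fun i => by
    rw [coeff_geomSeries, if_pos (by have := ha i; omega)]
  have t2 := coeff_mul_coeff_le (coeff_geomSeries_nonneg (a 0)) (coeff_geomSeries_nonneg (a 1))
    (a 0 - 1) (a 1 - 1)
  have t3 := coeff_mul_coeff_le hA2 (coeff_geomSeries_nonneg (a 2))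
    (a 0 - 1 + (a 1 - 1)) (a 2 - 1)
  have t4 := coeff_mul_coeff_le hP hA3 n (a 0 - 1 + (a 1 - 1) + (a 2 - 1))
  rw [top, top, mul_one] at t2
  rw [top, mul_one] at t3
  have van : ∀ i, ∀ m, d i - 1 < m → (geomSeries (d i)).coeff m = 0 := fun i m hm => by
    rw [coeff_geomSeries, if_neg (by omega)]
  have hzero := coeff_mul_eq_zero_of_lt (coeff_mul_eq_zero_of_lt (van 0) (van 1)) (van 2)
    (n + (a 0 - 1 + (a 1 - 1) + (a 2 - 1)))
    (by have := ha 0; have := ha 1; have := ha 2; have := hd 0; have := hd 1; have := hd 2; omega)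
  rw [key, hzero] at t4
  have := hP n
  nlinarith

end Series

/-! ### The Jacobian ideal -/

section Jacobian

variable {K : Type*} [Field K] {α : Fin 3 → ℕ}

/-- The Jacobian ideal `(∂f/∂x, ∂f/∂y, ∂f/∂z)`. -/
noncomputable def jacobianIdeal (f : MvPolynomial (Fin 3) K) : Ideal (MvPolynomial (Fin 3) K) :=
  Ideal.span {pderiv 0 f} ⊔ Ideal.span {pderiv 1 f} ⊔ Ideal.span {pderiv 2 f}

/-- The socle degree of the Milnor algebra `R/J` is `∑ (w - 2 α_i) = w`, so every form of larger
degree lies in `J`. -/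
lemma mem_jacobianIdeal (hα : ∀ i, 0 < α i) {f : MvPolynomial (Fin 3) K}
    (hf : f.IsWeightedHomogeneous α (α 0 + α 1 + α 2))
    (hsing : HasIsolatedSingularity (n := 2) f) {n : ℕ} (hn : α 0 + α 1 + α 2 < n)
    {r : MvPolynomial (Fin 3) K} (hr : r.IsWeightedHomogeneous α n) : r ∈ jacobianIdeal f := by
  have hlist : (List.finRange (2 + 1)).map (fun i => MvPolynomial.pderiv i f) =
      [pderiv 0 f, pderiv 1 f, pderiv 2 f] := by
    simp [List.finRange_succ]
  unfold HasIsolatedSingularity at hsing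
  rw [hlist] at hsing
  obtain ⟨⟨hreg⟩, htop⟩ := hsing
  have r0 := hreg 0 (by simp)
  have r1 := hreg 1 (by simp)
  have r2 := hreg 2 (by simp)
  rw [isSMulRegular_quotient_iff_mem_of_smul_mem] at r0 r1 r2
  simp only [List.take_zero, List.take_succ_cons, Ideal.ofList_nil, Ideal.ofList_cons,
    List.getElem_cons_zero, List.getElem_cons_succ, smul_eq_mul, Ideal.mul_top, sup_bot_eq,
    ← sup_assoc] at r0 r1 r2 htop
  have hne : ∀ I : Ideal (MvPolynomial (Fin 3) K), I ≤ jacobianIdeal f →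
      ∀ g, (∀ r, g * r ∈ I → r ∈ I) → g ≠ 0 := by
    rintro I hI g hg rfl
    apply htop
    rw [eq_comm, Ideal.eq_top_iff_one]
    exact hI (hg 1 (by simp))
  have hdeg : ∀ i, (pderiv i f).IsWeightedHomogeneous α (α 0 + α 1 + α 2 - α i) := fun i => by
    refine hf.pderiv (Nat.sub_add_cancel ?_)
    fin_cases i <;> simp <;> omega
  have hne0 : ∀ i, pderiv i f ≠ 0 := by
    intro i
    fin_cases i
    · exact hne _ bot_le _ r0
    · exact hne _ (le_sup_left.trans le_sup_left) _ r1
    · exact hne _ le_sup_left _ r2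
  have h0 := hilbertSeries_bot (K := K) hα
  have hJ := hilbertSeries_three hα (fun i => pderiv i f) _ hdeg hne0 r1 r2
  have hz := coeff_eq_zero_of_mul_eq (P := hilbertSeries α (jacobianIdeal f))
    (fun n => by
      rw [hilbertSeries, PowerSeries.coeff_mk]
      exact hilbertFn_nonneg hα _ _)
    α (fun i => α 0 + α 1 + α 2 - α i) hα
    (fun i => by
      have := hα 0; have := hα 1; have := hα 2
      fin_cases i <;> simp <;> omega)
    (by
      rw [jacobianIdeal, hJ, mul_right_comm, h0, one_mul]) n (by omega)
  rw [hilbertSeries, PowerSeries.coeff_mk] at hz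
  exact mem_of_hilbertFn_eq_zero hα hz hr

end Jacobian

/-! ### Frobenius powers of the maximal ideal -/

section Frobenius

variable {K : Type*} [Field K]

/-- The exponent vector of the monomial `(xyz)^k`. -/
noncomputable def diagExp (k : ℕ) : Fin 3 →₀ ℕ := Finsupp.equivFunOnFinite.symm fun _ => k

@[simp] lemma diagExp_apply (k : ℕ) (i : Fin 3) : diagExp k i = k := rfl

lemma weight_three (α : Fin 3 → ℕ) (m : Fin 3 →₀ ℕ) :
    Finsupp.weight α m = m 0 * α 0 + m 1 * α 1 + m 2 * α 2 := by
  rw [Finsupp.weight_apply, Finsupp.sum_fintype _ _ (by simp), Fin.sum_univ_three]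
  simp

lemma mem_frobeniusPower_iff {q : ℕ} {r : MvPolynomial (Fin 3) K} :
    r ∈ frobeniusPower K 2 q ↔ ∀ m : Fin 3 →₀ ℕ, (∀ i, m i < q) → coeff m r = 0 := by
  have e : frobeniusPower K 2 q = Ideal.span ((fun s => monomial s (1 : K)) ''
      Set.range fun i : Fin 3 => Finsupp.single i q) := by
    rw [frobeniusPower, ← Set.range_comp]
    congr 1
    ext r
    simp [X_pow_eq_monomial]
  rw [e, mem_ideal_span_monomial_image]
  constructor
  · intro h m hm
    by_contra hc
    obtain ⟨_, ⟨i, rfl⟩, hi⟩ := h m (mem_support_iff.mpr hc)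
    have := hi i
    simp only [Finsupp.single_eq_same] at this
    exact absurd (hm i) (by omega)
  · intro h m hm
    by_contra! hc
    apply mem_support_iff.mp hm
    refine h m fun i => ?_
    have := hc _ ⟨i, rfl⟩
    rw [Finsupp.single_le_iff] at this
    omega

lemma one_notMem_frobeniusPower {q : ℕ} (hq : 0 < q) :
    (1 : MvPolynomial (Fin 3) K) ∉ frobeniusPower K 2 q := by
  rw [mem_frobeniusPower_iff]
  intro h
  simpa using h 0 (by simpa using hq)

variable {p : ℕ} [CharP K p]

/-- `x_i^q` has zero derivative when `p ∣ q`, so derivations preserve `m^{[q]}`. -/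
lemma pderiv_mem_frobeniusPower {q : ℕ} (hq : p ∣ q) (i : Fin 3) {r : MvPolynomial (Fin 3) K}
    (hr : r ∈ frobeniusPower K 2 q) : pderiv i r ∈ frobeniusPower K 2 q := by
  have hq0 : ((q : ℕ) : MvPolynomial (Fin 3) K) = 0 := (CharP.cast_eq_zero_iff _ p q).mpr hq
  unfold frobeniusPower at hr
  induction hr using Submodule.span_induction with
  | mem x hx =>
    obtain ⟨j, rfl⟩ := hx
    simp only
    rw [Derivation.leibniz_pow, ← Nat.cast_smul_eq_nsmul (MvPolynomial (Fin 3) K), hq0, zero_smul]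
    exact zero_mem _
  | zero => rw [map_zero]; exact zero_mem _
  | add x y _ _ hx hy => rw [map_add]; exact add_mem hx hy
  | smul a x hx hx' =>
    rw [smul_eq_mul, Derivation.leibniz]
    exact add_mem (Ideal.mul_mem_left _ _ hx') (Ideal.mul_mem_right _ _ hx)

/-- Suppose `p ∣ q` and the least exponent `k + 1` with `f^{k+1} ∈ m^{[q]}` is prime to `p`; then
`k + 1 ≥ q - 1`. Differentiating shows that `f^k` multiplies the Jacobian ideal, hence every form of
degree above `w`, into `m^{[q]}`; but some monomial of degree `(q - 1) w - k w` multiplies `f^k`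
outside `m^{[q]}`. -/
lemma le_of_pow_succ_mem {α : Fin 3 → ℕ} (hα : ∀ i, 0 < α i) {f : MvPolynomial (Fin 3) K}
    (hf : f.IsWeightedHomogeneous α (α 0 + α 1 + α 2))
    (hsing : HasIsolatedSingularity (n := 2) f) {q k : ℕ} (hq : p ∣ q)
    (hk : f ^ (k + 1) ∈ frobeniusPower K 2 q) (hk' : f ^ k ∉ frobeniusPower K 2 q)
    (hpk : ¬ p ∣ k + 1) : q ≤ k + 2 := by
  have hd : ∀ i, f ^ k * pderiv i f ∈ frobeniusPower K 2 q := by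
    intro i
    have h := pderiv_mem_frobeniusPower hq i hk
    have hc : ((k + 1 : ℕ) : K) ≠ 0 := fun h0 => hpk ((CharP.cast_eq_zero_iff K p _).mp h0)
    rw [Derivation.leibniz_pow, Nat.add_sub_cancel, ← Nat.cast_smul_eq_nsmul K] at h
    have h' := ((frobeniusPower K 2 q).restrictScalars K).smul_mem ((k + 1 : ℕ) : K)⁻¹ h
    rwa [smul_smul, inv_mul_cancel₀ hc, one_smul] at h'
  have hJ : ∀ r ∈ jacobianIdeal f, f ^ k * r ∈ frobeniusPower K 2 q := by
    intro r hr
    have hle : jacobianIdeal f ≤ (frobeniusPower K 2 q).colon {f ^ k} := by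
      refine sup_le (sup_le ?_ ?_) ?_ <;>
      · rw [Ideal.span_singleton_le_iff_mem, Submodule.mem_colon_singleton, smul_eq_mul, mul_comm]
        exact hd _
    have := hle hr
    rwa [Submodule.mem_colon_singleton, smul_eq_mul, mul_comm] at this
  rw [mem_frobeniusPower_iff] at hk'
  push Not at hk'
  obtain ⟨m, hm, hmc⟩ := hk'
  have hle : m ≤ diagExp (q - 1) := fun i => by
    have := hm i
    rw [diagExp_apply]
    omega
  have hadd : m + (diagExp (q - 1) - m) = diagExp (q - 1) := add_tsub_cancel_of_le hle
  have hw : Finsupp.weight α m = k * (α 0 + α 1 + α 2) := (hf.pow k) hmc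
  have hmono : monomial (diagExp (q - 1) - m) (1 : K) ∉ jacobianIdeal f := by
    intro h
    have h2 := mem_frobeniusPower_iff.mp (hJ _ h) (diagExp (q - 1)) fun i => by
      have := hm i
      rw [diagExp_apply]
      omega
    have h3 := coeff_mul_monomial m (diagExp (q - 1) - m) (1 : K) (f ^ k)
    rw [hadd, h2, mul_one] at h3
    exact hmc h3.symm
  have hwle : Finsupp.weight α (diagExp (q - 1) - m) ≤ α 0 + α 1 + α 2 := by
    by_contra! hlt
    exact hmono (mem_jacobianIdeal hα hf hsing hlt (isWeightedHomogeneous_monomial _ _ _ rfl))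
  have hsum := congrArg (Finsupp.weight α) hadd
  rw [map_add, hw, weight_three α (diagExp (q - 1))] at hsum
  simp only [diagExp_apply] at hsum
  have hpos : 0 < α 0 + α 1 + α 2 := by have := hα 0; omega
  have : (q - 1) * (α 0 + α 1 + α 2) ≤ (k + 1) * (α 0 + α 1 + α 2) := by linarith
  have := Nat.le_of_mul_le_mul_right this hpos
  omega

variable [Fact p.Prime]

lemma pow_char_mem_frobeniusPower {q : ℕ} {r : MvPolynomial (Fin 3) K}
    (hr : r ∈ frobeniusPower K 2 q) : r ^ p ∈ frobeniusPower K 2 (p * q) := by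
  have := Ideal.mem_map_of_mem (frobenius (MvPolynomial (Fin 3) K) p) hr
  rw [frobeniusPower, Ideal.map_span, ← Set.range_comp] at this
  have e : (⇑(frobenius (MvPolynomial (Fin 3) K) p) ∘ fun i : Fin (2 + 1) => X i ^ q) =
      fun i : Fin (2 + 1) => (X i : MvPolynomial (Fin 3) K) ^ (p * q) := by
    ext1 i
    simp only [Function.comp, frobenius_def]
    rw [← pow_mul, mul_comm]
  rw [e] at this
  exact this

lemma coeff_smul_pow_char (r : MvPolynomial (Fin 3) K) (m : Fin 3 →₀ ℕ) :
    coeff (p • m) (r ^ p) = coeff m r ^ p := by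
  rw [← map_frobenius_expand p, coeff_map,
    coeff_expand_smul p (Fact.out : p.Prime).ne_zero, frobenius_def]

lemma exists_of_coeff_pow_char_ne_zero {r : MvPolynomial (Fin 3) K} {m : Fin 3 →₀ ℕ}
    (h : coeff m (r ^ p) ≠ 0) : ∃ m', m = p • m' := by
  rw [← map_frobenius_expand p, coeff_map] at h
  have h' : coeff m (expand p r) ≠ 0 := fun h0 => h (by rw [h0, map_zero])
  by_contra! hc
  apply h'
  have hr := r.support_sum_monomial_coeff
  rw [← hr, map_sum, coeff_sum]
  refine Finset.sum_eq_zero fun x _ => ?_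
  rw [expand_monomial, coeff_monomial, if_neg (hc x).symm]

/-- Flatness of Frobenius: `r^p ∈ m^{[pq]}` only if `r ∈ m^{[q]}`. -/
lemma mem_of_pow_char_mem {q : ℕ} {r : MvPolynomial (Fin 3) K}
    (hr : r ^ p ∈ frobeniusPower K 2 (p * q)) : r ∈ frobeniusPower K 2 q := by
  rw [mem_frobeniusPower_iff] at hr ⊢
  intro m hm
  have := hr (p • m) fun i => by
    rw [Finsupp.smul_apply, smul_eq_mul]
    exact Nat.mul_lt_mul_of_pos_left (hm i) (Fact.out : p.Prime).pos
  rw [coeff_smul_pow_char] at this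
  exact eq_zero_of_pow_eq_zero this

/-! ### Computation of `μ_f(p^e)` -/

variable {α : Fin 3 → ℕ} {f : MvPolynomial (Fin 3) K}

lemma pow_mem_frobeniusPower (hα : ∀ i, 0 < α i)
    (hf : f.IsWeightedHomogeneous α (α 0 + α 1 + α 2)) (e : ℕ) :
    f ^ p ^ e ∈ frobeniusPower K 2 (p ^ e) := by
  induction e with
  | zero =>
    rw [pow_zero, pow_one, mem_frobeniusPower_iff]
    intro m hm
    by_contra hc
    have h := hf hc
    rw [weight_three] at h
    have h0 : ∀ i, m i = 0 := fun i => by have := hm i; omega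
    have := hα 0
    simp only [h0] at h
    omega
  | succ e ih =>
    have := pow_char_mem_frobeniusPower (p := p) ih
    rwa [← pow_mul, ← pow_succ, ← pow_succ'] at this

lemma pow_muF_mem (hα : ∀ i, 0 < α i)
    (hf : f.IsWeightedHomogeneous α (α 0 + α 1 + α 2)) (e : ℕ) :
    f ^ muF (n := 2) f (p ^ e) ∈ frobeniusPower K 2 (p ^ e) :=
  Nat.sInf_mem (s := {k : ℕ | f ^ k ∈ frobeniusPower K 2 (p ^ e)})
    ⟨_, pow_mem_frobeniusPower hα hf e⟩

lemma muF_le {q k : ℕ} (h : f ^ k ∈ frobeniusPower K 2 q) : muF (n := 2) f q ≤ k :=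
  Nat.sInf_le h

/-- The value `μ_f(p^e)` is either divisible by `p` or at least `p^e - 1`. -/
lemma dvd_muF_or_le (hα : ∀ i, 0 < α i) (hf : f.IsWeightedHomogeneous α (α 0 + α 1 + α 2))
    (hsing : HasIsolatedSingularity (n := 2) f) (e : ℕ) :
    p ∣ muF (n := 2) f (p ^ (e + 1)) ∨ p ^ (e + 1) ≤ muF (n := 2) f (p ^ (e + 1)) + 1 := by
  by_cases hp : p ∣ muF (n := 2) f (p ^ (e + 1))
  · exact Or.inl hp
  right
  have hmem := pow_muF_mem (p := p) hα hf (e + 1)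
  obtain ⟨k, hk⟩ : ∃ k, muF (n := 2) f (p ^ (e + 1)) = k + 1 :=
    Nat.exists_eq_succ_of_ne_zero fun h => hp (h ▸ dvd_zero p)
  rw [hk] at hmem hp ⊢
  refine le_of_pow_succ_mem hα hf hsing (dvd_pow_self p e.succ_ne_zero) hmem (fun h => ?_) hp
  have := muF_le h
  omega

/-- A monomial of degree `k w` with all exponents at most `k`, or all at least `k`, is
`(xyz)^k`. -/
lemma eq_diagExp_of_le (hα : ∀ i, 0 < α i) {m : Fin 3 →₀ ℕ} {k : ℕ}
    (hw : Finsupp.weight α m = k * (α 0 + α 1 + α 2))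
    (h : (∀ i, m i ≤ k) ∨ (∀ i, k ≤ m i)) : m = diagExp k := by
  rw [weight_three] at hw
  have key : m 0 * α 0 = k * α 0 ∧ m 1 * α 1 = k * α 1 ∧ m 2 * α 2 = k * α 2 := by
    rcases h with h | h <;>
    · have h0 := Nat.mul_le_mul_right (α 0) (h 0)
      have h1 := Nat.mul_le_mul_right (α 1) (h 1)
      have h2 := Nat.mul_le_mul_right (α 2) (h 2)
      refine ⟨?_, ?_, ?_⟩ <;> linarith
  ext i
  fin_cases i
  · exact Nat.eq_of_mul_eq_mul_right (hα 0) key.1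
  · exact Nat.eq_of_mul_eq_mul_right (hα 1) key.2.1
  · exact Nat.eq_of_mul_eq_mul_right (hα 2) key.2.2

/-- Writing `f^{pq-1} = f^{p-1} (f^{q-1})^p`, the coefficient of `(xyz)^{pq-1}` is the product of
that of `(xyz)^{p-1}` in `f^{p-1}` and the `p`-th power of that of `(xyz)^{q-1}` in `f^{q-1}`. -/
lemma coeff_pow_mul_sub_one (hα : ∀ i, 0 < α i)
    (hf : f.IsWeightedHomogeneous α (α 0 + α 1 + α 2)) {q : ℕ} (hq : 0 < q) :
    coeff (diagExp (p * q - 1)) (f ^ (p * q - 1)) =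
      coeff (diagExp (p - 1)) (f ^ (p - 1)) * coeff (diagExp (q - 1)) (f ^ (q - 1)) ^ p := by
  have hp : 0 < p := (Fact.out : p.Prime).pos
  have hexp : p * q - 1 = (p - 1) + p * (q - 1) := by
    obtain ⟨q, rfl⟩ := Nat.exists_eq_succ_of_ne_zero hq.ne'
    simp only [Nat.succ_eq_add_one, Nat.add_sub_cancel, mul_add, mul_one]
    omega
  have hdiag : diagExp (p * q - 1) = diagExp (p - 1) + p • diagExp (q - 1) := by
    ext i
    simp [hexp]
  have hpow : f ^ (p * q - 1) = f ^ (p - 1) * (f ^ (q - 1)) ^ p := by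
    rw [← pow_mul, ← pow_add, hexp, mul_comm p]
  rw [hpow, coeff_mul, Finset.sum_eq_single (diagExp (p - 1), p • diagExp (q - 1))]
  · rw [coeff_smul_pow_char]
  · rintro ⟨a, b⟩ hab hne
    by_contra hc
    rw [Finset.HasAntidiagonal.mem_antidiagonal] at hab
    have ha : coeff a (f ^ (p - 1)) ≠ 0 := left_ne_zero_of_mul hc
    obtain ⟨b', rfl⟩ := exists_of_coeff_pow_char_ne_zero (right_ne_zero_of_mul hc)
    -- `a + p b' = (pq - 1, pq - 1, pq - 1)` makes every exponent of `a` congruent to `-1` mod `p`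
    have hge : ∀ i, p - 1 ≤ a i := by
      intro i
      have h := DFunLike.congr_fun hab i
      simp only [Finsupp.add_apply, Finsupp.smul_apply, smul_eq_mul, diagExp_apply] at h
      have hlt : b' i < q := by
        by_contra! hle
        have := Nat.mul_le_mul_left p hle
        have : 0 < p * q := Nat.mul_pos hp hq
        omega
      have := Nat.mul_le_mul_left p (Nat.le_sub_one_of_lt hlt)
      omega
    have haw : a = diagExp (p - 1) := eq_diagExp_of_le hα (hf.pow (p - 1) ha) (Or.inr hge)
    subst haw
    rw [hdiag] at hab
    exact hne (Prod.ext rfl (add_left_cancel hab))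
  · intro h
    exact absurd (Finset.HasAntidiagonal.mem_antidiagonal.mpr hdiag.symm) h

lemma muF_of_coeff_ne_zero (hα : ∀ i, 0 < α i)
    (hf : f.IsWeightedHomogeneous α (α 0 + α 1 + α 2))
    (hc : coeff (diagExp (p - 1)) (f ^ (p - 1)) ≠ 0) (e : ℕ) :
    muF (n := 2) f (p ^ e) = p ^ e := by
  have hp : 0 < p := (Fact.out : p.Prime).pos
  have hcoeff : coeff (diagExp (p ^ e - 1)) (f ^ (p ^ e - 1)) ≠ 0 := by
    induction e with
    | zero =>
      have : diagExp 0 = 0 := by ext i; simp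
      simp [this]
    | succ e ih =>
      rw [pow_succ', coeff_pow_mul_sub_one hα hf (pow_pos hp e)]
      exact mul_ne_zero hc (pow_ne_zero _ ih)
  apply le_antisymm (muF_le (pow_mem_frobeniusPower hα hf e))
  by_contra! hlt
  have hmem := pow_muF_mem (p := p) hα hf e
  have h2 : f ^ (p ^ e - 1) ∈ frobeniusPower K 2 (p ^ e) :=
    Ideal.mem_of_dvd _ (pow_dvd_pow f (by omega)) hmem
  refine hcoeff (mem_frobeniusPower_iff.mp h2 _ fun i => ?_)
  have : 0 < p ^ e := pow_pos hp e
  rw [diagExp_apply]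
  omega

lemma muF_of_coeff_eq_zero (hα : ∀ i, 0 < α i)
    (hf : f.IsWeightedHomogeneous α (α 0 + α 1 + α 2))
    (hsing : HasIsolatedSingularity (n := 2) f)
    (hc : coeff (diagExp (p - 1)) (f ^ (p - 1)) = 0) (e : ℕ) :
    muF (n := 2) f (p ^ (e + 1)) = p ^ e * (p - 1) := by
  have hp2 : 2 ≤ p := (Fact.out : p.Prime).two_le
  induction e with
  | zero =>
    have hmem : f ^ (p - 1) ∈ frobeniusPower K 2 (p ^ (0 + 1)) := by
      rw [mem_frobeniusPower_iff]
      intro m hm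
      by_contra hm0
      have hmd := eq_diagExp_of_le hα (hf.pow (p - 1) hm0) (Or.inl fun i => by
        have := hm i
        simp only [zero_add, pow_one] at this
        omega)
      exact hm0 (hmd ▸ hc)
    have hle := muF_le hmem
    have hpos : muF (n := 2) f (p ^ (0 + 1)) ≠ 0 := by
      intro h0
      have h := pow_muF_mem (p := p) hα hf (0 + 1)
      rw [h0, pow_zero] at h
      exact one_notMem_frobeniusPower (by positivity) h
    rcases dvd_muF_or_le (p := p) hα hf hsing 0 with h | h
    · have := Nat.le_of_dvd (Nat.pos_of_ne_zero hpos) h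
      omega
    · simp only [zero_add, pow_one, pow_zero, one_mul] at *
      omega
  | succ e ih =>
    have hmem := pow_char_mem_frobeniusPower (p := p) (pow_muF_mem (p := p) hα hf (e + 1))
    rw [← pow_mul, ← pow_succ', ih] at hmem
    have hup := muF_le hmem
    have hval : p ^ e * (p - 1) * p = p ^ (e + 1) * (p - 1) := by rw [pow_succ]; ring
    rw [hval] at hup
    apply le_antisymm hup
    rcases dvd_muF_or_le (p := p) hα hf hsing (e + 1) with ⟨j, hj⟩ | h
    · have hmem' := pow_muF_mem (p := p) hα hf (e + 1 + 1)
      rw [hj, mul_comm p j, pow_mul, pow_succ' p (e + 1)] at hmem'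
      have hle := muF_le (mem_of_pow_char_mem hmem')
      rw [ih] at hle
      rw [hj, ← hval, mul_comm p j]
      exact Nat.mul_le_mul_right p hle
    · -- impossible: `μ_f(pq) ≤ pq - q < pq - 1` for `q = p ^ (e + 1) ≥ 2`
      have h2 : 2 ≤ p ^ (e + 1) := hp2.trans (Nat.le_self_pow e.succ_ne_zero p)
      have h3 : p ^ (e + 1) * (p - 1) + p ^ (e + 1) = p ^ (e + 1 + 1) := by
        rw [pow_succ p (e + 1), ← Nat.mul_succ, Nat.succ_eq_add_one, Nat.sub_add_cancel (by omega)]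
      omega

end Frobenius

/-- let `f ∈ K[x,y,z]` be quasi-homogeneous of degree
`w = α_x + α_y + α_z` with an isolated singularity. If the coefficient of
`(xyz)^{p−1}` in `f^{p−1}` is nonzero then `fpt(f) = 1`; otherwise
`fpt(f) = 1 − 1/p`. -/
theorem statement11 {K : Type*} [Field K] {p : ℕ} [Fact p.Prime] [CharP K p]
    (α : Fin 3 → ℕ) (hα : ∀ i, 0 < α i)
    (f : MvPolynomial (Fin 3) K)
    (hf : f.IsWeightedHomogeneous α (α 0 + α 1 + α 2))
    (hsing : HasIsolatedSingularity (n := 2) f) :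
    (coeff (Finsupp.equivFunOnFinite.symm fun _ : Fin 3 => p - 1) (f ^ (p - 1)) ≠ 0 →
      HasFpt p f 1) ∧
    (coeff (Finsupp.equivFunOnFinite.symm fun _ : Fin 3 => p - 1) (f ^ (p - 1)) = 0 →
      HasFpt p f (1 - 1 / (p : ℝ))) := by
  have hp : (p : ℝ) ≠ 0 := Nat.cast_ne_zero.mpr (Fact.out : p.Prime).ne_zero
  refine ⟨fun hc => ?_, fun hc => ?_⟩
  · have h : ∀ e : ℕ, (muF (n := 2) f (p ^ e) : ℝ) / (p : ℝ) ^ e = 1 := fun e => by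
      rw [muF_of_coeff_ne_zero hα hf hc e, Nat.cast_pow, div_self (pow_ne_zero e hp)]
    unfold HasFpt
    simp only [h]
    exact tendsto_const_nhds
  · have h : ∀ e : ℕ, (muF (n := 2) f (p ^ (e + 1)) : ℝ) / (p : ℝ) ^ (e + 1) = 1 - 1 / p := by
      intro e
      rw [muF_of_coeff_eq_zero hα hf hsing hc e, Nat.cast_mul, Nat.cast_pow,
        Nat.cast_sub (Fact.out : p.Prime).one_le, Nat.cast_one]
      field_simp
      ring
    unfold HasFpt
    rw [← tendsto_add_atTop_iff_nat 1]
    simp only [h]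
    exact tendsto_const_nhds
end

section
/- Let K be a field of characteristic p with p an odd prime, and let f = x y^2 + x^4 ∈ K[x, y]. Then μ_f(p) = ⌈(5p − 3)/8⌉, and the F-pure threshold of f is: fpt(f) = 5/8 if p ≡ 1 or 3 (mod 8); fpt(f) = 5/8 − 1/(8p) if p ≡ 5 (mod 8); and fpt(f) = 5/8 − 3/(8p) if p ≡ 7 (mod 8). -/
/-!
Expanding `f ^ k` binomially, its monomials are `x^(a+4b) y^(2a)` with `a + b = k`, and the
coefficient of this monomial is `C(k, a)`. Hence `f ^ k ∉ m^[q]` iff there are `a + b = k` with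
`2a < q`, `a + 4b < q` and `p ∤ C(k, a)`. The two inequalities give
`8k = 2(a + 4b) + 3(2a) ≤ 5(q - 1)` (`pow_mem_of_lt`), and conversely any admissible pair `(a, b)`
gives `a + b < μ_f(q)` (`lt_muF`).

* For `q = p`, no binomial coefficient vanishes, so `μ_f(p) = ⌊5(p - 1)/8⌋ + 1` with the optimal
  pair `a = (p-1)/2`, `b = ⌊(p-1)/8⌋`.
* For `p ≡ 1, 3 (mod 8)`, adding `a = (q-1)/2` and `b = ⌊q/8⌋` in base `p` produces no carry, so by
  Lucas' theorem `5q/8 - O(1) ≤ μ_f(q) ≤ 5q/8 + O(1)` (`exists_pair_one_three`).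
* For `p = 8c + r` with `r = 5, 7`, Frobenius gives `μ_f(p^(e+1)) ≤ μ_f(p) p^e`. Equality holds: the
  base-`p` digits of `a` are all `(p-1)/2`, those of `b` are a leading `c` followed by digits `(p-1)/2`,
  and again no carry occurs (`exists_pair_five_seven`). So the threshold is `μ_f(p)/p`.
-/

open MvPolynomial Filter Topology

/-! ### Membership of powers of `f` in `m^[q]` -/

section Membership

variable {K : Type*} [Field K]

lemma frobeniusPower_eq_span_pair (q : ℕ) :
    frobeniusPower K 1 q = Ideal.span {(X 0 : MvPolynomial (Fin 2) K) ^ q, X 1 ^ q} := by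
  unfold frobeniusPower
  congr 1
  ext g
  simp [Fin.exists_fin_two, eq_comm]

/-- A polynomial in the monomial ideal `m^[q]` has no monomial whose exponents are all below `q`. -/
lemma coeff_eq_zero_of_mem {q : ℕ} {g : MvPolynomial (Fin 2) K} (hg : g ∈ frobeniusPower K 1 q)
    (m : Fin 2 →₀ ℕ) (h0 : m 0 < q) (h1 : m 1 < q) : coeff m g = 0 := by
  rw [frobeniusPower_eq_span_pair, Ideal.mem_span_pair] at hg
  obtain ⟨u, v, rfl⟩ := hg
  rw [coeff_add, X_pow_eq_monomial, X_pow_eq_monomial, coeff_mul_monomial', coeff_mul_monomial',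
    if_neg, if_neg, add_zero]
  · intro h
    have := h 1
    simp at this
    omega
  · intro h
    have := h 0
    simp at this
    omega

lemma pow_eq_sum (k : ℕ) :
    ((X 0 * X 1 ^ 2 + X 0 ^ 4 : MvPolynomial (Fin 2) K)) ^ k =
      ∑ m ∈ Finset.HasAntidiagonal.antidiagonal k,
        (k.choose m.1 : MvPolynomial (Fin 2) K) * (X 0 ^ (m.1 + 4 * m.2) * X 1 ^ (2 * m.1)) := by
  rw [(Commute.all _ _).add_pow']
  refine Finset.sum_congr rfl fun m _ => ?_
  rw [nsmul_eq_mul]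
  ring

lemma coeff_pow (a b : ℕ) :
    coeff (Finsupp.single 0 (a + 4 * b) + Finsupp.single 1 (2 * a))
      ((X 0 * X 1 ^ 2 + X 0 ^ 4 : MvPolynomial (Fin 2) K) ^ (a + b)) = ((a + b).choose a : K) := by
  rw [pow_eq_sum, coeff_sum, Finset.sum_eq_single (a, b)]
  · rw [X_pow_eq_monomial, X_pow_eq_monomial, monomial_mul, ← map_natCast C, coeff_C_mul]
    simp
  · rintro ⟨i, j⟩ hij hne
    rw [X_pow_eq_monomial, X_pow_eq_monomial, monomial_mul, ← map_natCast C, coeff_C_mul,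
      coeff_monomial, if_neg, mul_zero]
    intro h
    have h1 := DFunLike.congr_fun h 1
    simp at h1
    rw [Finset.HasAntidiagonal.mem_antidiagonal] at hij
    simp only at hij
    exact hne (by ext <;> simp <;> omega)
  · simp

lemma pow_mem_of_lt {q k : ℕ} (h : 5 * q < 8 * k + 5) :
    (X 0 * X 1 ^ 2 + X 0 ^ 4 : MvPolynomial (Fin 2) K) ^ k ∈ frobeniusPower K 1 q := by
  rw [pow_eq_sum, frobeniusPower_eq_span_pair]
  refine Ideal.sum_mem _ fun m hm => Ideal.mul_mem_left _ _ ?_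
  rw [Finset.HasAntidiagonal.mem_antidiagonal] at hm
  rcases le_or_gt q (m.1 + 4 * m.2) with h0 | h0
  · exact Ideal.mul_mem_right _ _
      (Ideal.pow_mem_of_pow_mem _ (Ideal.subset_span (by simp)) h0)
  · have h1 : q ≤ 2 * m.1 := by omega
    exact Ideal.mul_mem_left _ _
      (Ideal.pow_mem_of_pow_mem _ (Ideal.subset_span (by simp)) h1)

/-- An admissible pair of exponents bounds `μ_f(q)` from below. -/
lemma lt_muF {p : ℕ} [CharP K p] {q a b : ℕ} (h0 : a + 4 * b < q) (h1 : 2 * a < q)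
    (hc : ¬ p ∣ (a + b).choose a) :
    a + b < muF (n := 1) (X 0 * X 1 ^ 2 + X 0 ^ 4 : MvPolynomial (Fin 2) K) q := by
  by_contra! hle
  have hne : {k : ℕ | (X 0 * X 1 ^ 2 + X 0 ^ 4 : MvPolynomial (Fin 2) K) ^ k ∈
      frobeniusPower K 1 q}.Nonempty := ⟨q, pow_mem_of_lt (by omega)⟩
  have hmin : (X 0 * X 1 ^ 2 + X 0 ^ 4 : MvPolynomial (Fin 2) K) ^
      muF (n := 1) (X 0 * X 1 ^ 2 + X 0 ^ 4 : MvPolynomial (Fin 2) K) q ∈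
      frobeniusPower K 1 q := Nat.sInf_mem hne
  have hmem := Ideal.pow_mem_of_pow_mem _ hmin hle
  have := coeff_eq_zero_of_mem hmem (Finsupp.single 0 (a + 4 * b) + Finsupp.single 1 (2 * a))
    (by simpa using h0) (by simpa using h1)
  rw [coeff_pow, CharP.cast_eq_zero_iff K p] at this
  exact hc this

lemma pow_mem_frobeniusPower_s13 {p : ℕ} [Fact p.Prime] [CharP K p] {q : ℕ}
    {g : MvPolynomial (Fin 2) K} (hg : g ∈ frobeniusPower K 1 q) (e : ℕ) :
    g ^ p ^ e ∈ frobeniusPower K 1 (q * p ^ e) := by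
  rw [frobeniusPower_eq_span_pair, Ideal.mem_span_pair] at *
  obtain ⟨u, v, rfl⟩ := hg
  refine ⟨u ^ p ^ e, v ^ p ^ e, ?_⟩
  rw [add_pow_char_pow, mul_pow, mul_pow, pow_mul, pow_mul]

end Membership

/-! ### Carry-free additions in base `p` -/

section Binomials

variable {p : ℕ} [Fact p.Prime]

lemma not_dvd_choose_of_lt {a b : ℕ} (h : a + b < p) : ¬ p ∣ (a + b).choose a := by
  intro hd
  have hp : p.Prime := Fact.out
  have h1 : p ∣ (a + b).factorial := by
    rw [← Nat.add_choose_mul_factorial_mul_factorial a b, mul_assoc, ← Nat.choose_symm_add]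
    exact hd.mul_right _
  exact absurd (hp.dvd_factorial.mp h1) (by omega)

/-- Lucas' theorem in the form used here: appending digits `s, t` whose sum does not carry
preserves non-divisibility of the binomial coefficient. -/
lemma not_dvd_choose_append {a b s t : ℕ} (hst : s + t < p) (h : ¬ p ∣ (a + b).choose a) :
    ¬ p ∣ ((p * a + s) + (p * b + t)).choose (p * a + s) := by
  have hp : p.Prime := Fact.out
  have hL := Choose.choose_modEq_choose_mod_mul_choose_div_nat (p := p)
    (n := (p * a + s) + (p * b + t)) (k := p * a + s)
  have e : (p * a + s) + (p * b + t) = p * (a + b) + (s + t) := by ring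
  have m1 : (p * (a + b) + (s + t)) % p = s + t := by
    rw [Nat.mul_add_mod, Nat.mod_eq_of_lt hst]
  have m2 : (p * a + s) % p = s := by
    rw [Nat.mul_add_mod, Nat.mod_eq_of_lt (by omega)]
  have d1 : (p * (a + b) + (s + t)) / p = a + b := by
    rw [Nat.mul_add_div hp.pos, Nat.div_eq_of_lt hst, add_zero]
  have d2 : (p * a + s) / p = a := by
    rw [Nat.mul_add_div hp.pos, Nat.div_eq_of_lt (by omega), add_zero]
  rw [e, m1, m2, d1, d2] at hL
  rw [e, hL.dvd_iff dvd_rfl, hp.dvd_mul, not_or]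
  exact ⟨not_dvd_choose_of_lt hst, h⟩

/-- For `p ≡ 1, 3 (mod 8)`: `a = (q-1)/2` and `b = ⌊q/8⌋` add without carries in base `p`. -/
lemma exists_pair_one_three (hp8 : p % 8 = 1 ∨ p % 8 = 3) (e : ℕ) :
    ∃ a b, 2 * a + 1 = p ^ e ∧ (8 * b + 1 = p ^ e ∨ 8 * b + 3 = p ^ e) ∧
      ¬ p ∣ (a + b).choose a := by
  have hp : p.Prime := Fact.out
  have h1 := hp.one_lt
  induction e with
  | zero => exact ⟨0, 0, by simp, by simp, by simpa using hp.one_lt.ne'⟩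
  | succ e ih =>
    obtain ⟨a, b, ha, hb, hc⟩ := ih
    -- the next digit of `b` is the quotient of `r * p` by `8`, with `r` the residue of `p ^ e`
    have key : ∀ r, 8 * b + r = p ^ e → r = 1 ∨ r = 3 →
        ∃ a b, 2 * a + 1 = p ^ (e + 1) ∧ (8 * b + 1 = p ^ (e + 1) ∨ 8 * b + 3 = p ^ (e + 1)) ∧
          ¬ p ∣ (a + b).choose a := by
      intro r hr hr'
      refine ⟨p * a + (p - 1) / 2, p * b + r * p / 8, ?_, ?_, not_dvd_choose_append ?_ hc⟩
      · rw [pow_succ, ← ha, add_mul]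
        have : 2 * a * p = 2 * (p * a) := by ring
        omega
      · rw [pow_succ, ← hr, add_mul]
        have : 8 * b * p = 8 * (p * b) := by ring
        rcases hr' with rfl | rfl
        · omega
        · omega
      · rcases hr' with rfl | rfl <;> omega
    rcases hb with hb | hb
    · exact key 1 hb (by simp)
    · exact key 3 hb (by simp)

/-- The carry-free pair whose digits are all `(p-1)/2`, except for the leading digit `c` of `b`. -/
lemma exists_pair_five_seven {c : ℕ} (hodd : p % 2 = 1) (hcp : 2 * c < p) (e : ℕ) :
    ∃ a b, 2 * a + 1 = p ^ (e + 1) ∧ 2 * b + 1 = (2 * c + 1) * p ^ e ∧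
      ¬ p ∣ (a + b).choose a := by
  induction e with
  | zero => exact ⟨(p - 1) / 2, c, by simp; omega, by simp, not_dvd_choose_of_lt (by omega)⟩
  | succ e ih =>
    obtain ⟨a, b, ha, hb, hc⟩ := ih
    refine ⟨p * a + (p - 1) / 2, p * b + (p - 1) / 2, ?_, ?_,
      not_dvd_choose_append (by omega) hc⟩
    · rw [pow_succ, ← ha, add_mul]
      have : 2 * a * p = 2 * (p * a) := by ring
      omega
    · rw [pow_succ, ← mul_assoc, ← hb, add_mul]
      have : 2 * b * p = 2 * (p * b) := by ring
      omega

end Binomials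

/-! ### Values of `μ_f` and the thresholds -/

section Thresholds

variable {K : Type*} [Field K] {p : ℕ} [Fact p.Prime] [CharP K p]

lemma muF_prime (hodd : p % 2 = 1) :
    muF (n := 1) (X 0 * X 1 ^ 2 + X 0 ^ 4 : MvPolynomial (Fin 2) K) p =
      (p - 1) / 2 + (p - 1) / 8 + 1 := by
  have h1 := (Fact.out : p.Prime).one_lt
  refine le_antisymm (Nat.sInf_le (pow_mem_of_lt (by omega))) ?_
  exact lt_muF (p := p) (by omega) (by omega) (not_dvd_choose_of_lt (by omega))

lemma hasFpt_one_three (hp8 : p % 8 = 1 ∨ p % 8 = 3) :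
    HasFpt (n := 1) p (X 0 * X 1 ^ 2 + X 0 ^ 4 : MvPolynomial (Fin 2) K) (5 / 8) := by
  have h1 := (Fact.out : p.Prime).one_lt
  have hp0 : (0 : ℝ) < p := by exact_mod_cast (Fact.out : p.Prime).pos
  have hbound : ∀ e : ℕ,
      5 * p ^ e ≤ 8 * muF (n := 1) (X 0 * X 1 ^ 2 + X 0 ^ 4 : MvPolynomial (Fin 2) K) (p ^ e) ∧
      8 * muF (n := 1) (X 0 * X 1 ^ 2 + X 0 ^ 4 : MvPolynomial (Fin 2) K) (p ^ e)
        ≤ 5 * p ^ e + 8 := by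
    intro e
    obtain ⟨a, b, ha, hb, hc⟩ := exists_pair_one_three hp8 e
    have hlow := lt_muF (K := K) (p := p) (q := p ^ e) (by omega) (by omega) hc
    have hup : muF (n := 1) (X 0 * X 1 ^ 2 + X 0 ^ 4 : MvPolynomial (Fin 2) K) (p ^ e) ≤
        5 * p ^ e / 8 + 1 := Nat.sInf_le (pow_mem_of_lt (by omega))
    omega
  have hlim : Tendsto (fun e : ℕ => (5 / 8 : ℝ) + ((p : ℝ)⁻¹) ^ e) atTop (𝓝 (5 / 8)) := by
    have := (tendsto_pow_atTop_nhds_zero_of_lt_one (r := (p : ℝ)⁻¹) (by positivity)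
      (inv_lt_one_of_one_lt₀ (by exact_mod_cast h1))).const_add (5 / 8 : ℝ)
    simpa using this
  refine tendsto_of_tendsto_of_tendsto_of_le_of_le tendsto_const_nhds hlim ?_ ?_
  · intro e
    have := (hbound e).1
    have : (5 : ℝ) * p ^ e ≤
      8 * (muF (n := 1) (X 0 * X 1 ^ 2 + X 0 ^ 4 : MvPolynomial (Fin 2) K) (p ^ e) : ℝ) := by
      exact_mod_cast this
    simp only
    rw [le_div_iff₀ (by positivity)]
    linarith
  · intro e
    have := (hbound e).2
    have : 8 * (muF (n := 1) (X 0 * X 1 ^ 2 + X 0 ^ 4 : MvPolynomial (Fin 2) K) (p ^ e) : ℝ)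
      ≤ (5 : ℝ) * p ^ e + 8 := by
      exact_mod_cast this
    simp only
    rw [div_le_iff₀ (by positivity), add_mul, inv_pow, inv_mul_cancel₀ (by positivity)]
    linarith

/-- For `p = 8c + r` with `r = 5, 7`, the number `(p-1)/2 + c + 1` is `μ_f(p)`. -/
lemma muF_five_seven {c : ℕ} (hp8 : p = 8 * c + 5 ∨ p = 8 * c + 7) (e : ℕ) :
    muF (n := 1) (X 0 * X 1 ^ 2 + X 0 ^ 4 : MvPolynomial (Fin 2) K) (p ^ (e + 1)) =
      ((p - 1) / 2 + c + 1) * p ^ e := by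
  apply le_antisymm
  · apply Nat.sInf_le
    rw [Set.mem_ofPred_eq, pow_mul, pow_succ']
    exact pow_mem_frobeniusPower_s13 (pow_mem_of_lt (by omega)) e
  · obtain ⟨a, b, ha, hb, hc⟩ := exists_pair_five_seven (p := p) (c := c) (by omega) (by omega) e
    have hpe : 0 < p ^ e := pow_pos (Fact.out : p.Prime).pos e
    have hq : p ^ (e + 1) = p * p ^ e := pow_succ' p e
    have hsum : 2 * (a + b + 1) = 2 * (((p - 1) / 2 + c + 1) * p ^ e) := by
      have h2 : 2 * ((p - 1) / 2 + c + 1) = p + (2 * c + 1) := by omega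
      rw [← mul_assoc, h2, add_mul]
      omega
    have hlt : a + 4 * b < p ^ (e + 1) := by
      have : (8 * c + 5) * p ^ e ≤ p * p ^ e := Nat.mul_le_mul_right _ (by omega)
      nlinarith
    have := lt_muF (K := K) (p := p) hlt (by omega) hc
    omega

lemma hasFpt_five_seven {c : ℕ} (hp8 : p = 8 * c + 5 ∨ p = 8 * c + 7) :
    HasFpt (n := 1) p (X 0 * X 1 ^ 2 + X 0 ^ 4 : MvPolynomial (Fin 2) K)
      ((((p - 1) / 2 + c + 1 : ℕ) : ℝ) / p) := by
  have hp0 : (p : ℝ) ≠ 0 := by exact_mod_cast (Fact.out : p.Prime).ne_zero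
  unfold HasFpt
  rw [← tendsto_add_atTop_iff_nat 1]
  refine tendsto_const_nhds.congr fun e => ?_
  rw [muF_five_seven hp8, Nat.cast_mul, Nat.cast_pow, pow_succ']
  field_simp

end Thresholds

/-- let `K` have odd prime characteristic `p` and
`f = x y² + x⁴ ∈ K[x,y]`. Then `μ_f(p) = ⌈(5p − 3)/8⌉` and
`fpt(f) = 5/8` if `p ≡ 1, 3 (mod 8)`, `fpt(f) = 5/8 − 1/(8p)` if `p ≡ 5 (mod 8)`,
and `fpt(f) = 5/8 − 3/(8p)` if `p ≡ 7 (mod 8)`. -/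
theorem statement13 {K : Type*} [Field K] {p : ℕ} [Fact p.Prime] [CharP K p]
    (hodd : p ≠ 2)
    (f : MvPolynomial (Fin 2) K)
    (hf : f = X 0 * X 1 ^ 2 + X 0 ^ 4) :
    (muF (n := 1) f p : ℤ) = ⌈((5 * p - 3 : ℚ)) / 8⌉ ∧
    (p % 8 = 1 ∨ p % 8 = 3 → HasFpt p f (5 / 8 : ℝ)) ∧
    (p % 8 = 5 → HasFpt p f ((5 / 8 : ℝ) - 1 / (8 * (p : ℝ)))) ∧
    (p % 8 = 7 → HasFpt p f ((5 / 8 : ℝ) - 3 / (8 * (p : ℝ)))) := by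
  subst hf
  have hp : p.Prime := Fact.out
  have hp0 : (p : ℝ) ≠ 0 := by exact_mod_cast hp.ne_zero
  have h2 : p % 2 = 1 := hp.eq_two_or_odd.resolve_left hodd
  refine ⟨?_, hasFpt_one_three, fun h => ?_, fun h => ?_⟩
  · rw [muF_prime h2, eq_comm, Int.ceil_eq_iff]
    obtain ⟨m, hm⟩ : ∃ m, m = (p - 1) / 2 + (p - 1) / 8 + 1 := ⟨_, rfl⟩
    rw [← hm]
    have hlo : 8 * m + 3 < 5 * p + 8 := by omega
    have hhi : 5 * p ≤ 8 * m + 3 := by omega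
    have hlo' : (8 * m + 3 : ℚ) < 5 * p + 8 := by exact_mod_cast hlo
    have hhi' : (5 * p : ℚ) ≤ 8 * m + 3 := by exact_mod_cast hhi
    push_cast
    constructor <;> linarith
  · have hc : p = 8 * (p / 8) + 5 := by omega
    have hm : 8 * ((p - 1) / 2 + p / 8 + 1) + 1 = 5 * p := by omega
    have hm' : 8 * (((p - 1) / 2 + p / 8 + 1 : ℕ) : ℝ) + 1 = 5 * p := by exact_mod_cast hm
    convert hasFpt_five_seven (K := K) (Or.inl hc) using 1
    field_simp
    linarith
  · have hc : p = 8 * (p / 8) + 7 := by omega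
    have hm : 8 * ((p - 1) / 2 + p / 8 + 1) + 3 = 5 * p := by omega
    have hm' : 8 * (((p - 1) / 2 + p / 8 + 1 : ℕ) : ℝ) + 3 = 5 * p := by exact_mod_cast hm
    convert hasFpt_five_seven (K := K) (Or.inr hc) using 1
    field_simp
    linarith
end
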